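/- arXiv:1607.00342 — 5 statements merged into one kernel-verified Lean document; each statement's English description precedes it below -/
import Mathlib

section
/- The symmetric invariance condition ℒ_{ρ_a} g = ω^b_a ∨ ι_{ρ_b} g + φ^b_a ∨ θ_b holds: for all indices a, i, j ∈ {1,…,n} and at every point of U, Σ_k ( ρ^k_a ∂_k g_{ij} + g_{kj} ∂_i ρ^k_a + g_{ik} ∂_j ρ^k_a ) = Σ_b ( ω^b_{ai} Σ_k ρ^k_b g_{kj} + ω^b_{aj} Σ_k ρ^k_b g_{ki} + φ^b_{ai} θ_{bj} + φ^b_{aj} θ_{bi} ). -/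
/-!
The Lie derivative of the metric is the symmetrised covariant derivative,
`(ℒ_ρ g)_{ij} = ∇_i ρ_j + ∇_j ρ_i`, so it suffices to see that the half of the right-hand side
carrying the index `i` on the connection forms is `∇_i ρ_j`.

Lowering an index of `N = θ* - ρ` gives `g_{jk} N^k_b = θ_{bj} - ρ_{bj}`, and the definition of
`φ` says `N^k_b φ^b_{ai} = ∇_i ρ^k_a - Γ̂^b_{ai} ρ^k_b - ρ^k_b T^b_{ai}`. Hence
`ω^b_{ai} ρ_{bj} + φ^b_{ai} θ_{bj} = (Γ̂ + T)^b_{ai} ρ_{bj} + g_{jk} N^k_b φ^b_{ai} = ∇_i ρ_{aj}`,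
in which `Γ̂` and `T` cancel (`half_identity`). The
symmetrised Christoffel terms add up to `ρ^k ∂_k g_{ij}` by metric compatibility
(`christoffel_lower_symm`).
-/

/-- If `B` is a right inverse of `A`, then `A (B v) = v`. -/
lemma sum_mul_rightInv {n : ℕ} {A B : Fin n → Fin n → ℝ}
    (h : ∀ i j, (∑ k, A i k * B k j) = if i = j then (1 : ℝ) else 0)
    (v : Fin n → ℝ) (i : Fin n) : ∑ k, A i k * ∑ l, B k l * v l = v i := by
  calc ∑ k, A i k * ∑ l, B k l * v l
      = ∑ l, (∑ k, A i k * B k l) * v l := by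
        simp only [Finset.mul_sum, Finset.sum_mul]
        rw [Finset.sum_comm]
        simp only [mul_assoc]
    _ = v i := by simp [h]

/-- Metric compatibility `g_{jk} Γ^k_{il} + g_{ik} Γ^k_{jl} = ∂_l g_{ij}` at a point, where
`dg l i j` stands for `∂_l g_{ij}`. -/
lemma christoffel_lower_symm {n : ℕ} {g ginv : Fin n → Fin n → ℝ}
    {dg Γ : Fin n → Fin n → Fin n → ℝ}
    (hginv : ∀ i j, (∑ k, g i k * ginv k j) = if i = j then (1 : ℝ) else 0)
    (hdg : ∀ l i j, dg l i j = dg l j i)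
    (hΓ : ∀ i j k, Γ i j k = (1 / 2) * ∑ l, ginv i l * (dg j l k + dg k l j - dg l j k))
    (i j l : Fin n) :
    (∑ k, g j k * Γ k i l) + ∑ k, g i k * Γ k j l = dg l i j := by
  have lower : ∀ i j, ∑ k, g j k * Γ k i l = (1 / 2) * (dg i j l + dg l j i - dg j i l) := by
    intro i j
    rw [← sum_mul_rightInv hginv (fun m => dg i m l + dg l m i - dg m i l) j, Finset.mul_sum]
    refine Finset.sum_congr rfl fun k _ => ?_
    rw [hΓ]
    ring
  rw [lower, lower, hdg l j i]
  ring

/-- `ω^b_i ρ_{bj} + φ^b_i θ_{bj} = g_{jk} P^k` at a point, for fixed `a` and `i`: here `P^k` stands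
for `∇_i ρ^k_a`, and `Γh`, `T`, `φ` for the coefficients with the indices `a`, `i` suppressed. -/
lemma half_identity {n : ℕ} {g ginv ρ θ N Ninv : Fin n → Fin n → ℝ} {P Γh T φ : Fin n → ℝ}
    (hg : ∀ i j, g i j = g j i)
    (hginv : ∀ i j, (∑ k, g i k * ginv k j) = if i = j then (1 : ℝ) else 0)
    (hN : ∀ k b, N k b = (∑ l, ginv k l * θ b l) - ρ k b)
    (hNinv : ∀ a b, (∑ k, N a k * Ninv k b) = if a = b then (1 : ℝ) else 0)
    (hφ : ∀ b, φ b = ∑ k, Ninv b k * (P k - (∑ c, Γh c * ρ k c) - ∑ c, ρ k c * T c))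
    (j : Fin n) :
    ∑ b, ((Γh b - φ b + T b) * (∑ k, ρ k b * g k j) + φ b * θ b j) = ∑ k, g j k * P k := by
  have hNφ : ∀ k, ∑ b, N k b * φ b = P k - (∑ c, Γh c * ρ k c) - ∑ c, ρ k c * T c := by
    intro k
    simp only [hφ]
    exact sum_mul_rightInv hNinv (fun k => P k - (∑ c, Γh c * ρ k c) - ∑ c, ρ k c * T c) k
  have hgN : ∀ b, ∑ k, g j k * N k b = θ b j - ∑ k, ρ k b * g k j := by
    intro b
    simp only [hN, mul_sub, Finset.sum_sub_distrib]
    rw [sum_mul_rightInv hginv (θ b) j]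
    simp only [hg j, mul_comm]
  calc ∑ b, ((Γh b - φ b + T b) * (∑ k, ρ k b * g k j) + φ b * θ b j)
      = ∑ b, ((Γh b + T b) * (∑ k, ρ k b * g k j) + (∑ k, g j k * N k b) * φ b) := by
        refine Finset.sum_congr rfl fun b _ => ?_
        rw [hgN]
        ring
    _ = ∑ k, g j k * ((∑ c, Γh c * ρ k c) + (∑ c, ρ k c * T c) + ∑ b, N k b * φ b) := by
        simp only [Finset.mul_sum, Finset.sum_mul, ← Finset.sum_add_distrib]
        rw [Finset.sum_comm]
        refine Finset.sum_congr rfl fun k _ => Finset.sum_congr rfl fun b _ => ?_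
        rw [hg k j]
        ring
    _ = ∑ k, g j k * P k := by
        refine Finset.sum_congr rfl fun k _ => ?_
        rw [hNφ]
        ring

/-- Partial derivative of a real-valued function on `ℝ^n` in the `i`-th coordinate
direction. -/
noncomputable def pd {n : ℕ} (f : (Fin n → ℝ) → ℝ) (i : Fin n) (x : Fin n → ℝ) : ℝ :=
  fderiv ℝ f x (Pi.single i 1)

/-- **Symmetric invariance condition** `ℒ_{ρ_a} g = ω^b_a ∨ ι_{ρ_b} g + φ^b_a ∨ θ_b`.
On an open set `U ⊆ ℝⁿ` with a Riemannian metric `g` (inverse `ginv`, Levi-Civita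
Christoffel symbols `Γ`), a closed-3-form-type field `H` (totally antisymmetric), data
`ρ^i_a`, `θ_{ai}` with `M = θ* + ρ` and `N = θ* − ρ` pointwise invertible, arbitrary
auxiliary connection coefficients `Γ̂`, and `T`, `φ`, `ω` defined by the general
formulas, the symmetric invariance condition holds at every point of `U`. -/
theorem symmetric_invariance_condition {n : ℕ}
    (U : Set (Fin n → ℝ)) (hU : IsOpen U)
    (g ginv : (Fin n → ℝ) → Fin n → Fin n → ℝ)
    (hg_smooth : ∀ i j, ContDiffOn ℝ (⊤ : ℕ∞) (fun x => g x i j) U)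
    (hginv_smooth : ∀ i j, ContDiffOn ℝ (⊤ : ℕ∞) (fun x => ginv x i j) U)
    (hg_symm : ∀ x ∈ U, ∀ i j, g x i j = g x j i)
    (hg_posdef : ∀ x ∈ U, ∀ v : Fin n → ℝ, v ≠ 0 → 0 < ∑ i, ∑ j, v i * g x i j * v j)
    (hginv : ∀ x ∈ U, ∀ i j, (∑ k, g x i k * ginv x k j) = if i = j then (1 : ℝ) else 0)
    (Γ : (Fin n → ℝ) → Fin n → Fin n → Fin n → ℝ)
    (hΓ : ∀ x ∈ U, ∀ i j k, Γ x i j k =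
      (1 / 2) * ∑ l, ginv x i l *
        (pd (fun y => g y l k) j x + pd (fun y => g y l j) k x - pd (fun y => g y j k) l x))
    (H : (Fin n → ℝ) → Fin n → Fin n → Fin n → ℝ)
    (hH_smooth : ∀ i j k, ContDiffOn ℝ (⊤ : ℕ∞) (fun x => H x i j k) U)
    (hH_anti₁ : ∀ x ∈ U, ∀ i j k, H x i j k = - H x j i k)
    (hH_anti₂ : ∀ x ∈ U, ∀ i j k, H x i j k = - H x i k j)
    (ρ θ : (Fin n → ℝ) → Fin n → Fin n → ℝ)
    (hρ_smooth : ∀ i a, ContDiffOn ℝ (⊤ : ℕ∞) (fun x => ρ x i a) U)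
    (hθ_smooth : ∀ a i, ContDiffOn ℝ (⊤ : ℕ∞) (fun x => θ x a i) U)
    (M N : (Fin n → ℝ) → Fin n → Fin n → ℝ)
    (hM : ∀ (x : Fin n → ℝ) (k b : Fin n), M x k b = (∑ l, ginv x k l * θ x b l) + ρ x k b)
    (hN : ∀ (x : Fin n → ℝ) (k b : Fin n), N x k b = (∑ l, ginv x k l * θ x b l) - ρ x k b)
    (Minv Ninv : (Fin n → ℝ) → Fin n → Fin n → ℝ)
    (hMinv₁ : ∀ x ∈ U, ∀ a b, (∑ k, Minv x a k * M x k b) = if a = b then (1 : ℝ) else 0)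
    (hMinv₂ : ∀ x ∈ U, ∀ a b, (∑ k, M x a k * Minv x k b) = if a = b then (1 : ℝ) else 0)
    (hNinv₁ : ∀ x ∈ U, ∀ a b, (∑ k, Ninv x a k * N x k b) = if a = b then (1 : ℝ) else 0)
    (hNinv₂ : ∀ x ∈ U, ∀ a b, (∑ k, N x a k * Ninv x k b) = if a = b then (1 : ℝ) else 0)
    (Γhat : (Fin n → ℝ) → Fin n → Fin n → Fin n → ℝ)
    (hΓhat_smooth : ∀ a b i, ContDiffOn ℝ (⊤ : ℕ∞) (fun x => Γhat x a b i) U)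
    (T φ ω : (Fin n → ℝ) → Fin n → Fin n → Fin n → ℝ)
    (hT : ∀ x ∈ U, ∀ a b i, T x a b i = ∑ k, Minv x a k *
      (pd (fun y => M y k b) i x + (∑ l, Γ x k i l * M x l b)
        - (∑ c, Γhat x c b i * M x k c)
        - (1 / 2) * ∑ l, ∑ m, ρ x l b * ginv x k m * H x m l i))
    (hφ : ∀ x ∈ U, ∀ a b i, φ x a b i = ∑ k, Ninv x a k *
      (pd (fun y => ρ y k b) i x + (∑ l, Γ x k i l * ρ x l b)
        - (∑ c, Γhat x c b i * ρ x k c) - ∑ c, ρ x k c * T x c b i))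
    (hω : ∀ x ∈ U, ∀ a b i, ω x a b i = Γhat x a b i - φ x a b i + T x a b i) :
    ∀ x ∈ U, ∀ a i j,
      (∑ k, (ρ x k a * pd (fun y => g y i j) k x
            + g x k j * pd (fun y => ρ y k a) i x
            + g x i k * pd (fun y => ρ y k a) j x))
        = ∑ b, (ω x b a i * (∑ k, ρ x k b * g x k j)
            + ω x b a j * (∑ k, ρ x k b * g x k i)
            + φ x b a i * θ x b j + φ x b a j * θ x b i) := by
  intro x hx a i j
  -- Symmetry of `g` is known only on `U`; openness of `U` passes it on to the derivatives.
  have hdg : ∀ l i j, pd (fun y => g y i j) l x = pd (fun y => g y j i) l x := by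
    intro l i j
    have h : (fun y => g y i j) =ᶠ[nhds x] fun y => g y j i :=
      Filter.eventuallyEq_of_mem (hU.mem_nhds hx) fun y hy => hg_symm y hy i j
    unfold pd
    rw [h.fderiv_eq]
  have half : ∀ i j, ∑ b, (ω x b a i * (∑ k, ρ x k b * g x k j) + φ x b a i * θ x b j)
      = ∑ k, g x j k * (pd (fun y => ρ y k a) i x + ∑ l, Γ x k i l * ρ x l a) := by
    intro i j
    simp only [hω x hx]
    exact half_identity (hg_symm x hx) (hginv x hx) (hN x) (hNinv₂ x hx)
      (fun b => hφ x hx b a i) j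
  have hΓg := christoffel_lower_symm (dg := fun l i j => pd (fun y => g y i j) l x)
    (hginv x hx) hdg (hΓ x hx) i j
  have hΓρ : (∑ k, g x j k * ∑ l, Γ x k i l * ρ x l a) + ∑ k, g x i k * ∑ l, Γ x k j l * ρ x l a
      = ∑ l, ρ x l a * pd (fun y => g y i j) l x := by
    have swap : ∀ i j, ∑ k, g x j k * ∑ l, Γ x k i l * ρ x l a
        = ∑ l, ρ x l a * ∑ k, g x j k * Γ x k i l := by
      intro i j
      simp only [Finset.mul_sum]
      rw [Finset.sum_comm]
      refine Finset.sum_congr rfl fun l _ => Finset.sum_congr rfl fun k _ => ?_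
      ring
    rw [swap, swap, ← Finset.sum_add_distrib]
    refine Finset.sum_congr rfl fun l _ => ?_
    rw [← mul_add, hΓg]
  have split : ∑ b, (ω x b a i * (∑ k, ρ x k b * g x k j)
            + ω x b a j * (∑ k, ρ x k b * g x k i)
            + φ x b a i * θ x b j + φ x b a j * θ x b i)
      = ∑ b, (ω x b a i * (∑ k, ρ x k b * g x k j) + φ x b a i * θ x b j)
        + ∑ b, (ω x b a j * (∑ k, ρ x k b * g x k i) + φ x b a j * θ x b i) := by
    rw [← Finset.sum_add_distrib]
    refine Finset.sum_congr rfl fun b _ => ?_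
    ring
  rw [split, half i j, half j i]
  simp only [mul_add, Finset.sum_add_distrib]
  rw [← hΓρ]
  simp only [fun k => hg_symm x hx k j]
  ring
end

section
/- The antisymmetric invariance condition ι_{ρ_a} H = dθ_a − ω^b_a ∧ θ_b ± φ^b_a ∧ ι_{ρ_b} g holds (for one choice of worldsheet-signature sign): for all indices a, i, j ∈ {1,…,n} and at every point of U, Σ_k ρ^k_a H_{kij} = ∂_i θ_{aj} − ∂_j θ_{ai} − Σ_b ( ω^b_{ai} θ_{bj} − ω^b_{aj} θ_{bi} ) − Σ_{b,k} ( φ^b_{ai} ρ^k_b g_{kj} − φ^b_{aj} ρ^k_b g_{ki} ). -/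
lemma mul_inv_apply {n : ℕ} {A B : Fin n → Fin n → ℝ}
    (h : ∀ a b, (∑ k, A a k * B k b) = if a = b then (1 : ℝ) else 0) (f : Fin n → ℝ) (k : Fin n) :
    ∑ b, A k b * ∑ l, B b l * f l = f k := by
  simp_rw [Finset.mul_sum, ← mul_assoc]
  rw [Finset.sum_comm]
  simp_rw [← Finset.sum_mul, h]
  simp

lemma pd_add {n : ℕ} {f h : (Fin n → ℝ) → ℝ} {x : Fin n → ℝ} (i : Fin n)
    (hf : DifferentiableAt ℝ f x) (hh : DifferentiableAt ℝ h x) :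
    pd (fun y => f y + h y) i x = pd f i x + pd h i x := by
  unfold pd
  rw [fderiv_fun_add hf hh]
  rfl

/-- Product rule for `v_j = g_{jk} vᵏ`; the lowered components `w` are only assumed to agree with
`g v` near `x`. -/
lemma pd_lowered {n : ℕ} {x : Fin n → ℝ} {w : (Fin n → ℝ) → ℝ}
    {g v : (Fin n → ℝ) → Fin n → ℝ} (i : Fin n)
    (hg : ∀ k, DifferentiableAt ℝ (fun y => g y k) x)
    (hv : ∀ k, DifferentiableAt ℝ (fun y => v y k) x)
    (hw : w =ᶠ[nhds x] fun y => ∑ k, g y k * v y k) :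
    pd w i x = ∑ k, g x k * pd (fun y => v y k) i x + ∑ k, pd (fun y => g y k) i x * v x k := by
  unfold pd
  rw [hw.fderiv_eq, fderiv_fun_sum fun k _ => (hg k).fun_mul (hv k), ← Finset.sum_add_distrib,
    ContinuousLinearMap.sum_apply]
  refine Finset.sum_congr rfl fun k _ => ?_
  rw [fderiv_fun_mul (hg k) (hv k)]
  simp [mul_comm]

/-- **Antisymmetric invariance condition** `ι_{ρ_a} H = dθ_a − ω^b_a ∧ θ_b ± φ^b_a ∧ ι_{ρ_b} g`
(for one choice of worldsheet-signature sign).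
On an open set `U ⊆ ℝⁿ` with a Riemannian metric `g` (inverse `ginv`, Levi-Civita
Christoffel symbols `Γ`), a closed-3-form-type field `H` (totally antisymmetric), data
`ρ^i_a`, `θ_{ai}` with `M = θ* + ρ` and `N = θ* − ρ` pointwise invertible, arbitrary
auxiliary connection coefficients `Γ̂`, and `T`, `φ`, `ω` defined by the general
formulas, the antisymmetric invariance condition holds at every point of `U`. -/
theorem antisymmetric_invariance_condition {n : ℕ}
    (U : Set (Fin n → ℝ)) (hU : IsOpen U)
    (g ginv : (Fin n → ℝ) → Fin n → Fin n → ℝ)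
    (hg_smooth : ∀ i j, ContDiffOn ℝ (⊤ : ℕ∞) (fun x => g x i j) U)
    (hginv_smooth : ∀ i j, ContDiffOn ℝ (⊤ : ℕ∞) (fun x => ginv x i j) U)
    (hg_symm : ∀ x ∈ U, ∀ i j, g x i j = g x j i)
    (hg_posdef : ∀ x ∈ U, ∀ v : Fin n → ℝ, v ≠ 0 → 0 < ∑ i, ∑ j, v i * g x i j * v j)
    (hginv : ∀ x ∈ U, ∀ i j, (∑ k, g x i k * ginv x k j) = if i = j then (1 : ℝ) else 0)
    (Γ : (Fin n → ℝ) → Fin n → Fin n → Fin n → ℝ)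
    (hΓ : ∀ x ∈ U, ∀ i j k, Γ x i j k =
      (1 / 2) * ∑ l, ginv x i l *
        (pd (fun y => g y l k) j x + pd (fun y => g y l j) k x - pd (fun y => g y j k) l x))
    (H : (Fin n → ℝ) → Fin n → Fin n → Fin n → ℝ)
    (hH_smooth : ∀ i j k, ContDiffOn ℝ (⊤ : ℕ∞) (fun x => H x i j k) U)
    (hH_anti₁ : ∀ x ∈ U, ∀ i j k, H x i j k = - H x j i k)
    (hH_anti₂ : ∀ x ∈ U, ∀ i j k, H x i j k = - H x i k j)
    (ρ θ : (Fin n → ℝ) → Fin n → Fin n → ℝ)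
    (hρ_smooth : ∀ i a, ContDiffOn ℝ (⊤ : ℕ∞) (fun x => ρ x i a) U)
    (hθ_smooth : ∀ a i, ContDiffOn ℝ (⊤ : ℕ∞) (fun x => θ x a i) U)
    (M N : (Fin n → ℝ) → Fin n → Fin n → ℝ)
    (hM : ∀ (x : Fin n → ℝ) (k b : Fin n), M x k b = (∑ l, ginv x k l * θ x b l) + ρ x k b)
    (hN : ∀ (x : Fin n → ℝ) (k b : Fin n), N x k b = (∑ l, ginv x k l * θ x b l) - ρ x k b)
    (Minv Ninv : (Fin n → ℝ) → Fin n → Fin n → ℝ)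
    (hMinv₁ : ∀ x ∈ U, ∀ a b, (∑ k, Minv x a k * M x k b) = if a = b then (1 : ℝ) else 0)
    (hMinv₂ : ∀ x ∈ U, ∀ a b, (∑ k, M x a k * Minv x k b) = if a = b then (1 : ℝ) else 0)
    (hNinv₁ : ∀ x ∈ U, ∀ a b, (∑ k, Ninv x a k * N x k b) = if a = b then (1 : ℝ) else 0)
    (hNinv₂ : ∀ x ∈ U, ∀ a b, (∑ k, N x a k * Ninv x k b) = if a = b then (1 : ℝ) else 0)
    (Γhat : (Fin n → ℝ) → Fin n → Fin n → Fin n → ℝ)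
    (hΓhat_smooth : ∀ a b i, ContDiffOn ℝ (⊤ : ℕ∞) (fun x => Γhat x a b i) U)
    (T φ ω : (Fin n → ℝ) → Fin n → Fin n → Fin n → ℝ)
    (hT : ∀ x ∈ U, ∀ a b i, T x a b i = ∑ k, Minv x a k *
      (pd (fun y => M y k b) i x + (∑ l, Γ x k i l * M x l b)
        - (∑ c, Γhat x c b i * M x k c)
        - (1 / 2) * ∑ l, ∑ m, ρ x l b * ginv x k m * H x m l i))
    (hφ : ∀ x ∈ U, ∀ a b i, φ x a b i = ∑ k, Ninv x a k *
      (pd (fun y => ρ y k b) i x + (∑ l, Γ x k i l * ρ x l b)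
        - (∑ c, Γhat x c b i * ρ x k c) - ∑ c, ρ x k c * T x c b i))
    (hω : ∀ x ∈ U, ∀ a b i, ω x a b i = Γhat x a b i - φ x a b i + T x a b i) :
    ∀ x ∈ U, ∀ a i j,
      (∑ k, ρ x k a * H x k i j)
        = pd (fun y => θ y a j) i x - pd (fun y => θ y a i) j x
          - (∑ b, (ω x b a i * θ x b j - ω x b a j * θ x b i))
          - ∑ b, ∑ k, (φ x b a i * ρ x k b * g x k j - φ x b a j * ρ x k b * g x k i) := by
  intro x hx a i j
  have hnhds : U ∈ nhds x := hU.mem_nhds hx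
  have diff : ∀ {f : (Fin n → ℝ) → ℝ}, ContDiffOn ℝ (⊤ : ℕ∞) f U → DifferentiableAt ℝ f x :=
    fun hf => (hf.contDiffAt hnhds).differentiableAt (by simp)
  -- `S y k b` is the raised covector `θ*ᵏ_b`.
  set S : (Fin n → ℝ) → Fin n → Fin n → ℝ := fun y k b => ∑ l, ginv y k l * θ y b l with hS
  have hSdiff : ∀ k b, DifferentiableAt ℝ (fun y => S y k b) x := fun k b =>
    DifferentiableAt.fun_sum fun l _ =>
      (diff (hginv_smooth k l)).mul (diff (hθ_smooth b l))
  have hM' : ∀ y k b, M y k b = S y k b + ρ y k b := hM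
  have hN' : ∀ y k b, N y k b = S y k b - ρ y k b := hN
  have lower : ∀ y ∈ U, ∀ b j, ∑ k, g y j k * S y k b = θ y b j := fun y hy b j =>
    mul_inv_apply (hginv y hy) (fun l => θ y b l) j
  have hpdM : ∀ i k, pd (fun y => M y k a) i x
      = pd (fun y => S y k a) i x + pd (fun y => ρ y k a) i x := by
    intro i k
    rw [← pd_add i (hSdiff k a) (diff (hρ_smooth k a))]
    simp_rw [hM']
  have hpdsymm : ∀ i j k, pd (fun y => g y i j) k x = pd (fun y => g y j i) k x := by
    intro i j k
    unfold pd
    rw [Filter.EventuallyEq.fderiv_eq]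
    filter_upwards [hnhds] with y hy using hg_symm y hy i j
  -- The difference of the defining equations of `T` and `φ`.
  have raised : ∀ i k, ∑ b, (ω x b a i * S x k b + φ x b a i * ρ x k b)
      = pd (fun y => S y k a) i x + ∑ l, Γ x k i l * S x l a
        - (1 / 2) * ∑ m, ginv x k m * ∑ l, ρ x l a * H x m l i := by
    intro i k
    have h1 := mul_inv_apply (hMinv₂ x hx) (fun k => pd (fun y => M y k a) i x
        + (∑ l, Γ x k i l * M x l a) - (∑ c, Γhat x c a i * M x k c)
        - (1 / 2) * ∑ l, ∑ m, ρ x l a * ginv x k m * H x m l i) k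
    have h2 := mul_inv_apply (hNinv₂ x hx) (fun k => pd (fun y => ρ y k a) i x
        + (∑ l, Γ x k i l * ρ x l a) - (∑ c, Γhat x c a i * ρ x k c)
        - ∑ c, ρ x k c * T x c a i) k
    simp only [← hT x hx] at h1
    simp only [← hφ x hx] at h2
    have h3 : ∑ m, ginv x k m * ∑ l, ρ x l a * H x m l i
        = ∑ l, ∑ m, ρ x l a * ginv x k m * H x m l i := by
      simp_rw [Finset.mul_sum]
      rw [Finset.sum_comm]
      exact Finset.sum_congr rfl fun _ _ => Finset.sum_congr rfl fun _ _ => by ring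
    rw [hpdM] at h1
    simp only [hM', mul_add, add_mul, Finset.sum_add_distrib] at h1
    simp only [hN', sub_mul, Finset.sum_sub_distrib] at h2
    have h4 : ∑ b, (ω x b a i * S x k b + φ x b a i * ρ x k b)
        = ∑ b, Γhat x b a i * S x k b - ∑ b, S x k b * φ x b a i
          + ∑ b, S x k b * T x b a i + ∑ b, ρ x k b * φ x b a i := by
      rw [← Finset.sum_sub_distrib, ← Finset.sum_add_distrib, ← Finset.sum_add_distrib]
      exact Finset.sum_congr rfl fun b _ => by rw [hω x hx]; ring
    rw [h3, h4]
    linarith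
  have hΓlow : ∀ i j l, ∑ k, g x j k * Γ x k i l = (1 / 2) * (pd (fun y => g y j l) i x
      + pd (fun y => g y j i) l x - pd (fun y => g y i l) j x) := by
    intro i j l
    rw [← mul_inv_apply (hginv x hx) (fun m => pd (fun y => g y m l) i x
      + pd (fun y => g y m i) l x - pd (fun y => g y i l) m x) j, Finset.mul_sum]
    exact Finset.sum_congr rfl fun k _ => by rw [hΓ x hx]; ring
  have lowered : ∀ i j, ∑ b, ω x b a i * θ x b j + ∑ b, ∑ k, φ x b a i * ρ x k b * g x k j
      = pd (fun y => θ y a j) i x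
        - (1 / 2) * ∑ k, (pd (fun y => g y j k) i x + pd (fun y => g y i k) j x
          - pd (fun y => g y j i) k x) * S x k a
        - (1 / 2) * ∑ l, ρ x l a * H x j l i := by
    intro i j
    have hsum : ∑ k, g x j k * ∑ b, (ω x b a i * S x k b + φ x b a i * ρ x k b)
        = ∑ b, ω x b a i * θ x b j + ∑ b, ∑ k, φ x b a i * ρ x k b * g x k j := by
      simp_rw [Finset.mul_sum]
      rw [Finset.sum_comm, ← Finset.sum_add_distrib]
      refine Finset.sum_congr rfl fun b _ => ?_
      rw [← lower x hx b j, Finset.mul_sum, ← Finset.sum_add_distrib]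
      exact Finset.sum_congr rfl fun k _ => by rw [hg_symm x hx k j]; ring
    have hpd := pd_lowered (w := fun y => θ y a j) (g := fun y k => g y j k)
      (v := fun y k => S y k a) (x := x) i (fun k => diff (hg_smooth j k)) (fun k => hSdiff k a)
      (by filter_upwards [hnhds] with y hy using (lower y hy a j).symm)
    have hH := mul_inv_apply (hginv x hx) (fun m => ∑ l, ρ x l a * H x m l i) j
    have hΓS : ∑ k, g x j k * ∑ l, Γ x k i l * S x l a
        = ∑ l, (1 / 2) * (pd (fun y => g y j l) i x
          + pd (fun y => g y j i) l x - pd (fun y => g y i l) j x) * S x l a := by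
      simp_rw [← hΓlow, Finset.mul_sum, Finset.sum_mul]
      rw [Finset.sum_comm]
      exact Finset.sum_congr rfl fun _ _ => Finset.sum_congr rfl fun _ _ => by ring
    have hcomb : ∑ l, (1 / 2) * (pd (fun y => g y j l) i x
          + pd (fun y => g y j i) l x - pd (fun y => g y i l) j x) * S x l a
        = ∑ k, pd (fun y => g y j k) i x * S x k a
          - (1 / 2) * ∑ k, (pd (fun y => g y j k) i x + pd (fun y => g y i k) j x
            - pd (fun y => g y j i) k x) * S x k a := by
      rw [Finset.mul_sum, ← Finset.sum_sub_distrib]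
      exact Finset.sum_congr rfl fun _ _ => by ring
    rw [← hsum, hpd]
    simp_rw [raised, mul_sub, mul_add, Finset.sum_sub_distrib, Finset.sum_add_distrib]
    rw [hΓS, hcomb]
    have hhalf : ∑ k, g x j k * ((1 / 2) * ∑ m, ginv x k m * ∑ l, ρ x l a * H x m l i)
        = (1 / 2) * ∑ l, ρ x l a * H x j l i := by
      rw [← hH, Finset.mul_sum]
      exact Finset.sum_congr rfl fun _ _ => by ring
    rw [hhalf]
    ring
  have hsymm : ∑ k, (pd (fun y => g y j k) i x + pd (fun y => g y i k) j x
          - pd (fun y => g y j i) k x) * S x k a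
      = ∑ k, (pd (fun y => g y i k) j x + pd (fun y => g y j k) i x
          - pd (fun y => g y i j) k x) * S x k a :=
    Finset.sum_congr rfl fun k _ => by rw [hpdsymm j i k]; ring
  have hHji : ∑ l, ρ x l a * H x j l i = ∑ k, ρ x k a * H x k i j :=
    Finset.sum_congr rfl fun l _ => by rw [hH_anti₁ x hx j l i, hH_anti₂ x hx l j i]; ring
  have hHij : ∑ l, ρ x l a * H x i l j = - ∑ k, ρ x k a * H x k i j := by
    rw [← Finset.sum_neg_distrib]
    exact Finset.sum_congr rfl fun l _ => by rw [hH_anti₁ x hx i l j]; ring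
  have e1 := lowered i j
  have e2 := lowered j i
  rw [hHji, hsymm] at e1
  rw [hHij] at e2
  simp only [Finset.sum_sub_distrib]
  linarith
end

section
/- The coefficient functions ω^a_{bi} and φ^a_{bi} are independent of the choice of the auxiliary connection coefficients Γ̂^a_{bi}: writing T₀, φ₀, ω₀ for the quantities T, φ, ω computed with Γ̂ ≡ 0, one has, for every choice of smooth Γ̂, that T^a_{bi} = T₀^a_{bi} − Γ̂^a_{bi}, φ^a_{bi} = φ₀^a_{bi}, and ω^a_{bi} = ω₀^a_{bi} = T₀^a_{bi} − φ₀^a_{bi} at every point of U. -/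
/-- The coefficient functions `ω^a_{bi}` and `φ^a_{bi}` are independent of the choice of
the auxiliary connection coefficients `Γ̂^a_{bi}`: writing `T₀, φ₀, ω₀` for the quantities
computed with `Γ̂ ≡ 0`, one has `T = T₀ − Γ̂`, `φ = φ₀` and `ω = ω₀ = T₀ − φ₀` on `U`.
On an open set `U ⊆ ℝⁿ` with a Riemannian metric `g` (inverse `ginv`, Levi-Civita
Christoffel symbols `Γ`), a closed-3-form-type field `H` (totally antisymmetric), data
`ρ^i_a`, `θ_{ai}` with `M = θ* + ρ` and `N = θ* − ρ` pointwise invertible, arbitrary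
auxiliary connection coefficients `Γ̂`, and `T`, `φ`, `ω` defined by the general
formulas. -/
theorem coefficients_independent_of_auxiliary_connection {n : ℕ}
    (U : Set (Fin n → ℝ)) (hU : IsOpen U)
    (g ginv : (Fin n → ℝ) → Fin n → Fin n → ℝ)
    (hg_smooth : ∀ i j, ContDiffOn ℝ (⊤ : ℕ∞) (fun x => g x i j) U)
    (hginv_smooth : ∀ i j, ContDiffOn ℝ (⊤ : ℕ∞) (fun x => ginv x i j) U)
    (hg_symm : ∀ x ∈ U, ∀ i j, g x i j = g x j i)
    (hg_posdef : ∀ x ∈ U, ∀ v : Fin n → ℝ, v ≠ 0 → 0 < ∑ i, ∑ j, v i * g x i j * v j)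
    (hginv : ∀ x ∈ U, ∀ i j, (∑ k, g x i k * ginv x k j) = if i = j then (1 : ℝ) else 0)
    (Γ : (Fin n → ℝ) → Fin n → Fin n → Fin n → ℝ)
    (hΓ : ∀ x ∈ U, ∀ i j k, Γ x i j k =
      (1 / 2) * ∑ l, ginv x i l *
        (pd (fun y => g y l k) j x + pd (fun y => g y l j) k x - pd (fun y => g y j k) l x))
    (H : (Fin n → ℝ) → Fin n → Fin n → Fin n → ℝ)
    (hH_smooth : ∀ i j k, ContDiffOn ℝ (⊤ : ℕ∞) (fun x => H x i j k) U)
    (hH_anti₁ : ∀ x ∈ U, ∀ i j k, H x i j k = - H x j i k)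
    (hH_anti₂ : ∀ x ∈ U, ∀ i j k, H x i j k = - H x i k j)
    (ρ θ : (Fin n → ℝ) → Fin n → Fin n → ℝ)
    (hρ_smooth : ∀ i a, ContDiffOn ℝ (⊤ : ℕ∞) (fun x => ρ x i a) U)
    (hθ_smooth : ∀ a i, ContDiffOn ℝ (⊤ : ℕ∞) (fun x => θ x a i) U)
    (M N : (Fin n → ℝ) → Fin n → Fin n → ℝ)
    (hM : ∀ (x : Fin n → ℝ) (k b : Fin n), M x k b = (∑ l, ginv x k l * θ x b l) + ρ x k b)
    (hN : ∀ (x : Fin n → ℝ) (k b : Fin n), N x k b = (∑ l, ginv x k l * θ x b l) - ρ x k b)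
    (Minv Ninv : (Fin n → ℝ) → Fin n → Fin n → ℝ)
    (hMinv₁ : ∀ x ∈ U, ∀ a b, (∑ k, Minv x a k * M x k b) = if a = b then (1 : ℝ) else 0)
    (hMinv₂ : ∀ x ∈ U, ∀ a b, (∑ k, M x a k * Minv x k b) = if a = b then (1 : ℝ) else 0)
    (hNinv₁ : ∀ x ∈ U, ∀ a b, (∑ k, Ninv x a k * N x k b) = if a = b then (1 : ℝ) else 0)
    (hNinv₂ : ∀ x ∈ U, ∀ a b, (∑ k, N x a k * Ninv x k b) = if a = b then (1 : ℝ) else 0)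
    (Γhat : (Fin n → ℝ) → Fin n → Fin n → Fin n → ℝ)
    (hΓhat_smooth : ∀ a b i, ContDiffOn ℝ (⊤ : ℕ∞) (fun x => Γhat x a b i) U)
    (T φ ω : (Fin n → ℝ) → Fin n → Fin n → Fin n → ℝ)
    (hT : ∀ x ∈ U, ∀ a b i, T x a b i = ∑ k, Minv x a k *
      (pd (fun y => M y k b) i x + (∑ l, Γ x k i l * M x l b)
        - (∑ c, Γhat x c b i * M x k c)
        - (1 / 2) * ∑ l, ∑ m, ρ x l b * ginv x k m * H x m l i))
    (hφ : ∀ x ∈ U, ∀ a b i, φ x a b i = ∑ k, Ninv x a k *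
      (pd (fun y => ρ y k b) i x + (∑ l, Γ x k i l * ρ x l b)
        - (∑ c, Γhat x c b i * ρ x k c) - ∑ c, ρ x k c * T x c b i))
    (hω : ∀ x ∈ U, ∀ a b i, ω x a b i = Γhat x a b i - φ x a b i + T x a b i)
    (T₀ φ₀ ω₀ : (Fin n → ℝ) → Fin n → Fin n → Fin n → ℝ)
    (hT₀ : ∀ x ∈ U, ∀ a b i, T₀ x a b i = ∑ k, Minv x a k *
      (pd (fun y => M y k b) i x + (∑ l, Γ x k i l * M x l b)
        - (1 / 2) * ∑ l, ∑ m, ρ x l b * ginv x k m * H x m l i))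
    (hφ₀ : ∀ x ∈ U, ∀ a b i, φ₀ x a b i = ∑ k, Ninv x a k *
      (pd (fun y => ρ y k b) i x + (∑ l, Γ x k i l * ρ x l b)
        - ∑ c, ρ x k c * T₀ x c b i))
    (hω₀ : ∀ x ∈ U, ∀ a b i, ω₀ x a b i = - φ₀ x a b i + T₀ x a b i) :
    ∀ x ∈ U, ∀ a b i,
      T x a b i = T₀ x a b i - Γhat x a b i
        ∧ φ x a b i = φ₀ x a b i
        ∧ ω x a b i = ω₀ x a b i
        ∧ ω₀ x a b i = T₀ x a b i - φ₀ x a b i := by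
  intro x hx
  -- Contracting `Γ̂^c_{bi} M^k_c` with `M⁻¹` returns `Γ̂^a_{bi}`.
  have hcontr : ∀ a b i,
      ∑ k, Minv x a k * ∑ c, Γhat x c b i * M x k c = Γhat x a b i := by
    intro a b i
    calc ∑ k, Minv x a k * ∑ c, Γhat x c b i * M x k c
        = ∑ c, Γhat x c b i * ∑ k, Minv x a k * M x k c := by
          simp only [Finset.mul_sum]
          rw [Finset.sum_comm]
          exact Finset.sum_congr rfl fun c _ => Finset.sum_congr rfl fun k _ => by ring
      _ = Γhat x a b i := by simp [hMinv₁ x hx]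
  have hTT : ∀ a b i, T x a b i = T₀ x a b i - Γhat x a b i := by
    intro a b i
    rw [← hcontr a b i, hT x hx, hT₀ x hx, ← Finset.sum_sub_distrib]
    exact Finset.sum_congr rfl fun k _ => by ring
  have hφφ : ∀ a b i, φ x a b i = φ₀ x a b i := by
    intro a b i
    rw [hφ x hx, hφ₀ x hx]
    refine Finset.sum_congr rfl fun k _ => ?_
    -- The shift of `T` by `-Γ̂` cancels the explicit `Γ̂` term.
    have hshift : ∑ c, ρ x k c * T x c b i
        = ∑ c, ρ x k c * T₀ x c b i - ∑ c, Γhat x c b i * ρ x k c := by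
      rw [← Finset.sum_sub_distrib]
      exact Finset.sum_congr rfl fun c _ => by rw [hTT]; ring
    rw [hshift]
    ring
  intro a b i
  refine ⟨hTT a b i, hφφ a b i, ?_, ?_⟩
  · rw [hω x hx, hω₀ x hx, hTT, hφφ]
    ring
  · rw [hω₀ x hx]
    ring
end

section
/- Specialize to the Wess–Zumino Poisson sigma model data: ρ^i_a := π^{ai} and θ_{ai} := δ_{ai} (Kronecker delta). Then θ*^k_b = g^{kb}, the matrices M = (g^{kb} − π^{kb}) and N = (g^{kb} + π^{kb}) are invertible at every point of U, and with T, φ, ω defined by the general formulas (for any choice of smooth Γ̂^a_{bi}), both gauge-invariance conditions hold at every point of U: (i) Σ_k ( ρ^k_a ∂_k g_{ij} + g_{kj} ∂_i ρ^k_a + g_{ik} ∂_j ρ^k_a ) = Σ_b ( ω^b_{ai} Σ_k ρ^k_b g_{kj} + ω^b_{aj} Σ_k ρ^k_b g_{ki} + φ^b_{ai} θ_{bj} + φ^b_{aj} θ_{bi} ), and (ii) Σ_k ρ^k_a H_{kij} = ∂_i θ_{aj} − ∂_j θ_{ai} − Σ_b ( ω^b_{ai} θ_{bj} − ω^b_{aj}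 θ_{bi} ) − Σ_{b,k} ( φ^b_{ai} ρ^k_b g_{kj} − φ^b_{aj} ρ^k_b g_{ki} ). In other words, the WZ-twisted Poisson sigma model with kinetic term admits coefficient functions ω, φ solving its gauge-invariance conditions. -/
open Matrix in
/-- The inverse metric plus an antisymmetric matrix is invertible; this covers both
`M = K - π` and `N = K + π`. -/
lemma exists_inverse_add_antisymm {n : ℕ} (G K P : Matrix (Fin n) (Fin n) ℝ)
    (hpos : ∀ v : Fin n → ℝ, v ≠ 0 → 0 < v ⬝ᵥ G *ᵥ v)
    (hGK : G * K = 1) (hP : Pᵀ = -P) :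
    ∃ Q : Matrix (Fin n) (Fin n) ℝ, (K + P) * Q = 1 ∧ Q * (K + P) = 1 := by
  have hinj : ∀ v, (K + P) *ᵥ v = 0 → v = 0 := by
    intro v hv
    by_contra hne
    have hv' : G *ᵥ (K *ᵥ v) = v := by rw [mulVec_mulVec, hGK, one_mulVec]
    have hw : K *ᵥ v ≠ 0 := fun h0 => hne (by rw [← hv', h0, mulVec_zero])
    have hpv : v ⬝ᵥ P *ᵥ v = 0 := by
      have h1 : v ⬝ᵥ P *ᵥ v = -(v ⬝ᵥ P *ᵥ v) := by
        conv_lhs => rw [dotProduct_mulVec, ← mulVec_transpose, hP, neg_mulVec, neg_dotProduct,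
          dotProduct_comm]
      linarith
    have h2 := hpos _ hw
    rw [hv', dotProduct_comm] at h2
    have h3 : v ⬝ᵥ (K + P) *ᵥ v = 0 := by rw [hv, dotProduct_zero]
    rw [add_mulVec, dotProduct_add, hpv] at h3
    linarith
  have hunit : IsUnit (K + P) := by
    rw [← mulVec_injective_iff_isUnit]
    intro v w hvw
    exact sub_eq_zero.mp (hinj _ (by rw [mulVec_sub, sub_eq_zero]; exact hvw))
  obtain ⟨u, hu⟩ := hunit
  exact ⟨↑u⁻¹, by rw [← hu, u.mul_inv], by rw [← hu, u.inv_mul]⟩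

open Matrix in
/-- The matrix form of `R ω + K φ = ∂ρ + Γ ρ`; `s` and `r` stand for the `Γ̂`-coefficients and
for `∂ρ + Γ ρ`. -/
lemma killing_core {n : ℕ} (K R : Matrix (Fin n) (Fin n) ℝ) (s t f w r : Fin n → ℝ)
    (hf : (K - R) *ᵥ f = r - R *ᵥ s - R *ᵥ t) (hw : w = s - f + t) :
    R *ᵥ w + K *ᵥ f = r := by
  rw [sub_mulVec] at hf
  rw [hw, mulVec_add, mulVec_sub]
  linear_combination hf

open Matrix in
/-- The matrix form of `K ω + R φ = ∂K + Γ K - h`; `r` and `q` stand for `∂ρ + Γ ρ` and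
`∂K + Γ K`. -/
lemma closed_core {n : ℕ} (K R : Matrix (Fin n) (Fin n) ℝ) (s t f w r q h : Fin n → ℝ)
    (ht : (K + R) *ᵥ t = q + r - (K + R) *ᵥ s - h)
    (hf : (K - R) *ᵥ f = r - R *ᵥ s - R *ᵥ t) (hw : w = s - f + t) :
    K *ᵥ w + R *ᵥ f = q - h := by
  rw [sub_mulVec] at hf
  rw [add_mulVec, add_mulVec] at ht
  rw [hw, mulVec_add, mulVec_sub]
  linear_combination ht - hf

open Matrix in
/-- Lowering an index raised with the inverse metric, with the factor `1 / 2` that occurs in the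
Christoffel symbols and in the `H`-term. -/
lemma lower_half_raised {n : ℕ} (G K : Matrix (Fin n) (Fin n) ℝ) (hGK : G * K = 1)
    (c : Fin n → ℝ) (j : Fin n) :
    ∑ k, G j k * ((1 / 2) * ∑ l, K k l * c l) = (1 / 2) * c j := by
  have h : (G *ᵥ (K *ᵥ c)) j = c j := by rw [mulVec_mulVec, hGK, one_mulVec]
  rw [← h]
  simp only [mulVec, dotProduct, Finset.mul_sum]
  refine Finset.sum_congr rfl fun k _ => Finset.sum_congr rfl fun l _ => by ring

lemma pd_congr {n : ℕ} {U : Set (Fin n → ℝ)} (hU : IsOpen U) {f f' : (Fin n → ℝ) → ℝ}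
    (h : ∀ y ∈ U, f y = f' y) {x : Fin n → ℝ} (hx : x ∈ U) (i : Fin n) :
    pd f i x = pd f' i x := by
  have : f =ᶠ[nhds x] f' := Filter.eventuallyEq_of_mem (hU.mem_nhds hx) h
  rw [pd, pd, this.fderiv_eq]

/-- The derivative of `G K = 1`, in the form `G ∂K = -(∂G) K`. -/
lemma metric_mul_pd_inverse {n : ℕ} {U : Set (Fin n → ℝ)} (hU : IsOpen U)
    {g ginv : (Fin n → ℝ) → Fin n → Fin n → ℝ}
    (hg : ∀ x ∈ U, ∀ i j, DifferentiableAt ℝ (fun x => g x i j) x)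
    (hk : ∀ x ∈ U, ∀ i j, DifferentiableAt ℝ (fun x => ginv x i j) x)
    (hginv : ∀ x ∈ U, ∀ i j, (∑ k, g x i k * ginv x k j) = if i = j then (1 : ℝ) else 0)
    {x : Fin n → ℝ} (hx : x ∈ U) (i j a : Fin n) :
    ∑ k, g x j k * pd (fun y => ginv y k a) i x
      = -∑ k, pd (fun y => g y j k) i x * ginv x k a := by
  have h := pd_congr hU (fun y hy => hginv y hy j a) hx i
  have h0 : pd (fun _ : Fin n → ℝ => if j = a then (1 : ℝ) else 0) i x = 0 := by simp [pd]
  rw [h0, pd, fderiv_fun_sum (fun k _ => (hg x hx j k).fun_mul (hk x hx k a))] at h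
  rw [eq_neg_iff_add_eq_zero, ← Finset.sum_add_distrib, ← h, sum_apply]
  refine Finset.sum_congr rfl fun k _ => ?_
  rw [fderiv_fun_mul (hg x hx j k) (hk x hx k a)]
  simp [pd, mul_comm]

open Matrix in
/-- Multiplying the defining formula of a coefficient by the matrix whose inverse occurs in it. -/
lemma mulVec_eq_of_eq_inverse_sum {n : ℕ} (A B : Matrix (Fin n) (Fin n) ℝ)
    (hAB : ∀ a b, (∑ k, A a k * B k b) = if a = b then (1 : ℝ) else 0)
    (t r : Fin n → ℝ) (ht : ∀ a, t a = ∑ k, B a k * r k) : A *ᵥ t = r := by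
  have h1 : A * B = 1 := by
    ext a b
    rw [mul_apply, hAB, one_apply]
  have h2 : t = B *ᵥ r := funext ht
  rw [h2, mulVec_mulVec, h1, one_mulVec]

/-- **Gauging of the Wess–Zumino Poisson sigma model with kinetic term.**
Specializing the general data to `ρ^i_a := π^{ai}` and `θ_{ai} := δ_{ai}`, one has
`θ*^k_b = g^{kb}`, the matrices `M = (g^{kb} − π^{kb})` and `N = (g^{kb} + π^{kb})` are
invertible at every point of `U`, and with `T`, `φ`, `ω` defined by the general formulas
(for any choice of smooth auxiliary connection coefficients `Γ̂`), both gauge-invariance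
conditions hold at every point of `U`. -/
theorem wz_poisson_sigma_model_gauging {n : ℕ}
    (U : Set (Fin n → ℝ)) (hU : IsOpen U)
    (g ginv : (Fin n → ℝ) → Fin n → Fin n → ℝ)
    (hg_smooth : ∀ i j, ContDiffOn ℝ (⊤ : ℕ∞) (fun x => g x i j) U)
    (hginv_smooth : ∀ i j, ContDiffOn ℝ (⊤ : ℕ∞) (fun x => ginv x i j) U)
    (hg_symm : ∀ x ∈ U, ∀ i j, g x i j = g x j i)
    (hg_posdef : ∀ x ∈ U, ∀ v : Fin n → ℝ, v ≠ 0 → 0 < ∑ i, ∑ j, v i * g x i j * v j)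
    (hginv : ∀ x ∈ U, ∀ i j, (∑ k, g x i k * ginv x k j) = if i = j then (1 : ℝ) else 0)
    (Γ : (Fin n → ℝ) → Fin n → Fin n → Fin n → ℝ)
    (hΓ : ∀ x ∈ U, ∀ i j k, Γ x i j k =
      (1 / 2) * ∑ l, ginv x i l *
        (pd (fun y => g y l k) j x + pd (fun y => g y l j) k x - pd (fun y => g y j k) l x))
    (H : (Fin n → ℝ) → Fin n → Fin n → Fin n → ℝ)
    (hH_smooth : ∀ i j k, ContDiffOn ℝ (⊤ : ℕ∞) (fun x => H x i j k) U)
    (hH_anti₁ : ∀ x ∈ U, ∀ i j k, H x i j k = - H x j i k)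
    (hH_anti₂ : ∀ x ∈ U, ∀ i j k, H x i j k = - H x i k j)
    (π : (Fin n → ℝ) → Fin n → Fin n → ℝ)
    (hπ_smooth : ∀ i j, ContDiffOn ℝ (⊤ : ℕ∞) (fun x => π x i j) U)
    (hπ_anti : ∀ x ∈ U, ∀ i j, π x i j = - π x j i)
    (ρ θ : (Fin n → ℝ) → Fin n → Fin n → ℝ)
    (hρ : ∀ (x : Fin n → ℝ) (i a : Fin n), ρ x i a = π x a i)
    (hθ : ∀ (x : Fin n → ℝ) (a i : Fin n), θ x a i = if a = i then (1 : ℝ) else 0)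
    (M N : (Fin n → ℝ) → Fin n → Fin n → ℝ)
    (hM : ∀ (x : Fin n → ℝ) (k b : Fin n), M x k b = (∑ l, ginv x k l * θ x b l) + ρ x k b)
    (hN : ∀ (x : Fin n → ℝ) (k b : Fin n), N x k b = (∑ l, ginv x k l * θ x b l) - ρ x k b) :
    -- θ*^k_b = g^{kb}
    (∀ x ∈ U, ∀ k b, (∑ l, ginv x k l * θ x b l) = ginv x k b)
    -- M = g^{kb} − π^{kb} and N = g^{kb} + π^{kb}
    ∧ (∀ x ∈ U, ∀ k b, M x k b = ginv x k b - π x k b ∧ N x k b = ginv x k b + π x k b)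
    -- M is invertible at every point of U
    ∧ (∀ x ∈ U, ∃ P : Matrix (Fin n) (Fin n) ℝ,
        (Matrix.of fun k b => M x k b) * P = 1 ∧ P * (Matrix.of fun k b => M x k b) = 1)
    -- N is invertible at every point of U
    ∧ (∀ x ∈ U, ∃ P : Matrix (Fin n) (Fin n) ℝ,
        (Matrix.of fun k b => N x k b) * P = 1 ∧ P * (Matrix.of fun k b => N x k b) = 1)
    -- both gauge-invariance conditions hold for T, φ, ω given by the general formulas
    ∧ (∀ Minv Ninv : (Fin n → ℝ) → Fin n → Fin n → ℝ,
        ∀ Γhat T φ ω : (Fin n → ℝ) → Fin n → Fin n → Fin n → ℝ,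
        (∀ x ∈ U, ∀ a b, (∑ k, Minv x a k * M x k b) = if a = b then (1 : ℝ) else 0) →
        (∀ x ∈ U, ∀ a b, (∑ k, M x a k * Minv x k b) = if a = b then (1 : ℝ) else 0) →
        (∀ x ∈ U, ∀ a b, (∑ k, Ninv x a k * N x k b) = if a = b then (1 : ℝ) else 0) →
        (∀ x ∈ U, ∀ a b, (∑ k, N x a k * Ninv x k b) = if a = b then (1 : ℝ) else 0) →
        (∀ a b i, ContDiffOn ℝ (⊤ : ℕ∞) (fun x => Γhat x a b i) U) →
        (∀ x ∈ U, ∀ a b i, T x a b i = ∑ k, Minv x a k *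
          (pd (fun y => M y k b) i x + (∑ l, Γ x k i l * M x l b)
            - (∑ c, Γhat x c b i * M x k c)
            - (1 / 2) * ∑ l, ∑ m, ρ x l b * ginv x k m * H x m l i)) →
        (∀ x ∈ U, ∀ a b i, φ x a b i = ∑ k, Ninv x a k *
          (pd (fun y => ρ y k b) i x + (∑ l, Γ x k i l * ρ x l b)
            - (∑ c, Γhat x c b i * ρ x k c) - ∑ c, ρ x k c * T x c b i)) →
        (∀ x ∈ U, ∀ a b i, ω x a b i = Γhat x a b i - φ x a b i + T x a b i) →
        ∀ x ∈ U, ∀ a i j,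
          ((∑ k, (ρ x k a * pd (fun y => g y i j) k x
                + g x k j * pd (fun y => ρ y k a) i x
                + g x i k * pd (fun y => ρ y k a) j x))
            = ∑ b, (ω x b a i * (∑ k, ρ x k b * g x k j)
                + ω x b a j * (∑ k, ρ x k b * g x k i)
                + φ x b a i * θ x b j + φ x b a j * θ x b i))
          ∧ ((∑ k, ρ x k a * H x k i j)
            = pd (fun y => θ y a j) i x - pd (fun y => θ y a i) j x
              - (∑ b, (ω x b a i * θ x b j - ω x b a j * θ x b i))
              - ∑ b, ∑ k, (φ x b a i * ρ x k b * g x k j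
                  - φ x b a j * ρ x k b * g x k i))) := by
  have hK : ∀ x k b, (∑ l, ginv x k l * θ x b l) = ginv x k b := by
    intro x k b
    simp [hθ]
  have hMK : ∀ x k b, M x k b = ginv x k b + ρ x k b := fun x k b => by rw [hM, hK]
  have hNK : ∀ x k b, N x k b = ginv x k b - ρ x k b := fun x k b => by rw [hN, hK]
  have hρπ : ∀ x ∈ U, ∀ k b, ρ x k b = -π x k b := fun x hx k b => by rw [hρ, hπ_anti x hx]
  have hdiff : ∀ {f : (Fin n → ℝ) → ℝ}, ContDiffOn ℝ (⊤ : ℕ∞) f U →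
      ∀ x ∈ U, DifferentiableAt ℝ f x := fun hf x hx =>
    (hf.differentiableOn (by simp)).differentiableAt (hU.mem_nhds hx)
  have hGK : ∀ x ∈ U, (Matrix.of (g x)) * (Matrix.of (ginv x)) = 1 := by
    intro x hx
    ext i j
    rw [Matrix.mul_apply, Matrix.one_apply, ← hginv x hx i j]
    rfl
  have hinvertible : ∀ x ∈ U, ∀ P : Matrix (Fin n) (Fin n) ℝ, P.transpose = -P →
      ∃ Q : Matrix (Fin n) (Fin n) ℝ,
        (Matrix.of (ginv x) + P) * Q = 1 ∧ Q * (Matrix.of (ginv x) + P) = 1 := by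
    intro x hx P hP
    refine exists_inverse_add_antisymm (Matrix.of (g x)) _ P ?_ (hGK x hx) hP
    intro v hv
    have := hg_posdef x hx v hv
    simpa only [dotProduct, Matrix.mulVec, Finset.mul_sum, mul_assoc, Matrix.of_apply] using this
  refine ⟨fun x _ => hK x, fun x hx k b => ⟨?_, ?_⟩, fun x hx => ?_, fun x hx => ?_, ?_⟩
  · rw [hMK, hρπ x hx]; ring
  · rw [hNK, hρπ x hx]; ring
  · have hm : (Matrix.of fun k b => M x k b) = Matrix.of (ginv x) + Matrix.of (ρ x) := by
      ext k b
      exact hMK x k b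
    rw [hm]
    refine hinvertible x hx _ ?_
    ext i j
    simp [hρ, hπ_anti x hx i j]
  · have hm : (Matrix.of fun k b => N x k b) = Matrix.of (ginv x) + -Matrix.of (ρ x) := by
      ext k b
      simp [hNK, sub_eq_add_neg]
    rw [hm]
    refine hinvertible x hx _ ?_
    ext i j
    simp [hρ, hπ_anti x hx i j]
  intro Minv Ninv Γhat T φ ω _ hMM _ hNN _ hT hφ hω x hx a
  set G : Matrix (Fin n) (Fin n) ℝ := Matrix.of (g x) with hGdef
  set K : Matrix (Fin n) (Fin n) ℝ := Matrix.of (ginv x) with hKdef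
  set R : Matrix (Fin n) (Fin n) ℝ := Matrix.of (ρ x) with hRdef
  have hGKx : G * K = 1 := hGK x hx
  -- `r i`, `q i` are the Levi-Civita derivatives of `ρ_a` and of `θ*_a`; `h i` is the `H`-term.
  let r : Fin n → Fin n → ℝ := fun i k =>
    pd (fun y => ρ y k a) i x + ∑ l, Γ x k i l * ρ x l a
  let q : Fin n → Fin n → ℝ := fun i k =>
    pd (fun y => ginv y k a) i x + ∑ l, Γ x k i l * ginv x l a
  let h : Fin n → Fin n → ℝ := fun i k =>
    (1 / 2) * ∑ l, ∑ m, ρ x l a * ginv x k m * H x m l i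
  let s : Fin n → Fin n → ℝ := fun i c => Γhat x c a i
  let t : Fin n → Fin n → ℝ := fun i c => T x c a i
  let f : Fin n → Fin n → ℝ := fun i c => φ x c a i
  let w : Fin n → Fin n → ℝ := fun i c => ω x c a i
  have hpdM : ∀ i k, pd (fun y => M y k a) i x
      = pd (fun y => ginv y k a) i x + pd (fun y => ρ y k a) i x := by
    intro i k
    have e : (fun y => M y k a) = fun y => ginv y k a + ρ y k a := funext fun y => hMK y k a
    have hd : DifferentiableAt ℝ (fun y => ρ y k a) x := by
      simp only [hρ]
      exact hdiff (hπ_smooth a k) x hx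
    rw [e, pd, fderiv_fun_add (hdiff (hginv_smooth k a) x hx) hd]
    rfl
  have ht : ∀ i, (K + R).mulVec (t i) = q i + r i - (K + R).mulVec (s i) - h i := by
    intro i
    refine mulVec_eq_of_eq_inverse_sum (K + R) (Matrix.of (Minv x)) ?_ _ _ ?_
    · intro a b
      rw [← hMM x hx a b]
      simp [hMK, K, R]
    · intro b
      show T x b a i = _
      rw [hT x hx]
      refine Finset.sum_congr rfl fun k _ => ?_
      have e1 : ∑ l, Γ x k i l * M x l a
          = ∑ l, Γ x k i l * ginv x l a + ∑ l, Γ x k i l * ρ x l a := by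
        rw [← Finset.sum_add_distrib]
        exact Finset.sum_congr rfl fun l _ => by rw [hMK]; ring
      have e2 : ∑ c, Γhat x c a i * M x k c = (K + R).mulVec (s i) k :=
        Finset.sum_congr rfl fun l _ => by rw [hMK, mul_comm]; rfl
      rw [hpdM, e1, e2]
      simp only [Pi.sub_apply, Pi.add_apply, Matrix.of_apply, q, r, h]
      ring
  have hf : ∀ i, (K - R).mulVec (f i) = r i - R.mulVec (s i) - R.mulVec (t i) := by
    intro i
    refine mulVec_eq_of_eq_inverse_sum (K - R) (Matrix.of (Ninv x)) ?_ _ _ ?_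
    · intro a b
      rw [← hNN x hx a b]
      simp [hNK, K, R]
    · intro b
      show φ x b a i = _
      rw [hφ x hx]
      refine Finset.sum_congr rfl fun k _ => ?_
      have e2 : ∑ c, Γhat x c a i * ρ x k c = R.mulVec (s i) k :=
        Finset.sum_congr rfl fun l _ => by rw [mul_comm]; rfl
      rw [e2]
      rfl
  have hw : ∀ i, w i = s i - f i + t i := fun i => funext fun b => hω x hx b a i
  have hfirst : ∀ i, R.mulVec (w i) + K.mulVec (f i) = r i := fun i =>
    killing_core K R _ _ _ _ _ (hf i) (hw i)
  have hsecond : ∀ i, K.mulVec (w i) + R.mulVec (f i) = q i - h i := fun i =>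
    closed_core K R _ _ _ _ _ _ _ (ht i) (hf i) (hw i)
  have hGKv : ∀ v : Fin n → ℝ, G.mulVec (K.mulVec v) = v := fun v => by
    rw [Matrix.mulVec_mulVec, hGKx, Matrix.one_mulVec]
  have hGRv : ∀ (v : Fin n → ℝ) j,
      G.mulVec (R.mulVec v) j = ∑ b, v b * ∑ k, ρ x k b * g x k j := by
    intro v j
    simp only [Matrix.mulVec, dotProduct, Finset.mul_sum, G, R, Matrix.of_apply]
    rw [Finset.sum_comm]
    refine Finset.sum_congr rfl fun b _ => Finset.sum_congr rfl fun k _ => ?_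
    rw [hg_symm x hx j k]
    ring
  have hkill : ∀ i j, (∑ b, w i b * ∑ k, ρ x k b * g x k j) + f i j = ∑ k, g x j k * r i k := by
    intro i j
    have := congrFun (congrArg G.mulVec (hfirst i)) j
    rwa [Matrix.mulVec_add, Pi.add_apply, hGKv, hGRv] at this
  have hclosed : ∀ i j, w i j + (∑ b, f i b * ∑ k, ρ x k b * g x k j)
      = ∑ k, g x j k * q i k - ∑ k, g x j k * h i k := by
    intro i j
    have := congrFun (congrArg G.mulVec (hsecond i)) j
    rwa [Matrix.mulVec_add, Pi.add_apply, hGKv, hGRv, Matrix.mulVec_sub] at this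
  have hpds : ∀ i j l, pd (fun y => g y i j) l x = pd (fun y => g y j i) l x := fun i j l =>
    pd_congr hU (fun y hy => hg_symm y hy i j) hx l
  have hlow : ∀ i j (v : Fin n → ℝ), ∑ k, g x j k * ∑ l, Γ x k i l * v l
      = ∑ l, (1 / 2) * (pd (fun y => g y j l) i x + pd (fun y => g y j i) l x
          - pd (fun y => g y i l) j x) * v l := by
    intro i j v
    simp only [Finset.mul_sum]
    rw [Finset.sum_comm]
    refine Finset.sum_congr rfl fun l _ => ?_
    rw [← lower_half_raised G K hGKx
      (fun j => pd (fun y => g y j l) i x + pd (fun y => g y j i) l x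
          - pd (fun y => g y i l) j x) j, Finset.sum_mul]
    refine Finset.sum_congr rfl fun k _ => ?_
    rw [hΓ x hx, ← mul_assoc]
    rfl
  have hr : ∀ i j, ∑ k, g x j k * r i k = ∑ k, (g x j k * pd (fun y => ρ y k a) i x
      + (1 / 2) * (pd (fun y => g y j k) i x + pd (fun y => g y j i) k x
          - pd (fun y => g y i k) j x) * ρ x k a) := by
    intro i j
    simp only [r, mul_add]
    rw [Finset.sum_add_distrib, hlow, ← Finset.sum_add_distrib]
  have hq : ∀ i j, ∑ k, g x j k * q i k = ∑ l, (1 / 2) * (pd (fun y => g y j i) l x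
      - pd (fun y => g y j l) i x - pd (fun y => g y i l) j x) * ginv x l a := by
    intro i j
    simp only [q, mul_add]
    rw [Finset.sum_add_distrib, hlow, metric_mul_pd_inverse hU
      (fun x hx i j => hdiff (hg_smooth i j) x hx) (fun x hx i j => hdiff (hginv_smooth i j) x hx)
      hginv hx, ← Finset.sum_neg_distrib, ← Finset.sum_add_distrib]
    exact Finset.sum_congr rfl fun k _ => by ring
  have hh : ∀ i j, ∑ k, g x j k * h i k = (1 / 2) * ∑ l, ρ x l a * H x j l i := by
    intro i j
    rw [← lower_half_raised G K hGKx (fun m => ∑ l, ρ x l a * H x m l i) j]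
    refine Finset.sum_congr rfl fun k _ => ?_
    simp only [h, G, K, Matrix.of_apply]
    congr 2
    rw [Finset.sum_comm]
    refine Finset.sum_congr rfl fun m _ => ?_
    rw [Finset.mul_sum]
    exact Finset.sum_congr rfl fun l _ => by ring
  intro i j
  have hdelta : ∀ (v : Fin n → ℝ) j, ∑ b, v b * θ x b j = v j := by
    intro v j
    simp [hθ]
  constructor
  · have e : ∑ b, (ω x b a i * (∑ k, ρ x k b * g x k j)
                + ω x b a j * (∑ k, ρ x k b * g x k i)
                + φ x b a i * θ x b j + φ x b a j * θ x b i)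
        = ∑ k, g x j k * r i k + ∑ k, g x i k * r j k := by
      rw [← hkill, ← hkill, ← hdelta (f i) j, ← hdelta (f j) i]
      simp only [Finset.sum_add_distrib, w, f]
      ring
    rw [e, hr, hr, ← Finset.sum_add_distrib]
    refine Finset.sum_congr rfl fun k _ => ?_
    rw [hpds j i k, hg_symm x hx k j]
    ring
  · have hθc : ∀ i j, pd (fun y => θ y a j) i x = 0 := by
      intro i j
      simp [hθ, pd]
    have e : (∑ b, (ω x b a i * θ x b j - ω x b a j * θ x b i))
              + ∑ b, ∑ k, (φ x b a i * ρ x k b * g x k j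
                  - φ x b a j * ρ x k b * g x k i)
        = (∑ k, g x j k * q i k - ∑ k, g x j k * h i k)
          - (∑ k, g x i k * q j k - ∑ k, g x i k * h j k) := by
      rw [← hclosed, ← hclosed, ← hdelta (w i) j, ← hdelta (w j) i]
      simp only [Finset.sum_sub_distrib, Finset.mul_sum, w, f, mul_assoc]
      ring
    have eq' : ∑ k, g x j k * q i k = ∑ k, g x i k * q j k := by
      rw [hq, hq]
      refine Finset.sum_congr rfl fun l _ => ?_
      rw [hpds j i l]
      ring
    have eh : ∑ k, ρ x k a * H x k i j
        = ∑ k, g x j k * h i k - ∑ k, g x i k * h j k := by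
      rw [hh, hh, Finset.mul_sum, Finset.mul_sum, ← Finset.sum_sub_distrib]
      refine Finset.sum_congr rfl fun k _ => ?_
      rw [hH_anti₁ x hx j k i, hH_anti₂ x hx k j i, hH_anti₁ x hx i k j]
      ring
    rw [hθc, hθc]
    linarith
end

section
/- At each point of U the following are equivalent: (i) the H-twisted Jacobi identity holds, i.e. for all i, j, k, the cyclic sum over (i,j,k) of Σ_l π^{il} ∂_l π^{jk} equals Σ_{i',j',k'} H_{i'j'k'} π^{i'i} π^{j'j} π^{k'k}; (ii) for all i, j, the Lie bracket of vector fields [π♯dx^i, π♯dx^j] equals Σ_k C^{ij}_k · π♯dx^k, where C^{ij}_k := ∂_k π^{ij} + Σ_{m,n} H_{kmn} π^{mi} π^{nj}. (This expresses that the twisted Jacobi identity is exactly the integrability/anchor condition for the Dirac structure given by the graph of π in the H-twisted Courant algebroid.) -/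
/-- Openness of `U` makes the antisymmetry hold near `x`, so that it may be differentiated;
`fderiv` commutes with negation unconditionally. -/
theorem pd_antisymm {n : ℕ} {U : Set (Fin n → ℝ)} (hU : IsOpen U)
    {π : (Fin n → ℝ) → Fin n → Fin n → ℝ}
    (hπ : ∀ x ∈ U, ∀ i j, π x i j = - π x j i) {x : Fin n → ℝ} (hx : x ∈ U) (i j l : Fin n) :
    pd (fun y => π y i j) l x = - pd (fun y => π y j i) l x := by
  have h : (fun y => π y i j) =ᶠ[nhds x] fun y => - π y j i := by
    filter_upwards [hU.mem_nhds hx] with y hy using hπ y hy i j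
  simp [pd, h.fderiv_eq, fderiv_fun_neg]

theorem sum_cyclic_form {n : ℕ} {h : Fin n → Fin n → Fin n → ℝ}
    (h₁ : ∀ i j k, h i j k = - h j i k) (h₂ : ∀ i j k, h i j k = - h i k j)
    (a b c : Fin n → ℝ) :
    ∑ i, ∑ j, ∑ k, h i j k * a i * b j * c k
      = ∑ k, (∑ i, ∑ j, h k i j * a i * b j) * c k := by
  have hcyc : ∀ i j k, h k i j = h i j k := fun i j k => by rw [h₁ k i j, h₂ i k j, neg_neg]
  simp only [Finset.sum_mul]
  conv_rhs => rw [Finset.sum_comm]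
  refine Finset.sum_congr rfl fun i _ => ?_
  rw [Finset.sum_comm]
  exact Finset.sum_congr rfl fun k _ => Finset.sum_congr rfl fun j _ => by rw [hcyc i j k]

/-- **Twisted Jacobi identity ⇔ anchor condition for the graph of `π`.**
For a smooth antisymmetric bivector `π` and a smooth totally antisymmetric `H` on an open
set `U ⊆ ℝⁿ`, at each point of `U` the following are equivalent:
(i) the `H`-twisted Jacobi identity
`Σ_l π^{il} ∂_l π^{jk} + cycl(i,j,k) = Σ H_{i'j'k'} π^{i'i} π^{j'j} π^{k'k}`;
(ii) the Lie brackets `[π♯dx^i, π♯dx^j]` equal `Σ_k C^{ij}_k π♯dx^k` with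
`C^{ij}_k = ∂_k π^{ij} + Σ_{m,l} H_{kml} π^{mi} π^{lj}`, where
`π♯dx^i = Σ_m π^{im} ∂_m` and `[X,Y]^l = Σ_m (X^m ∂_m Y^l − Y^m ∂_m X^l)`. -/
theorem twisted_jacobi_iff_bracket_closure {n : ℕ}
    (U : Set (Fin n → ℝ)) (hU : IsOpen U)
    (π : (Fin n → ℝ) → Fin n → Fin n → ℝ)
    (hπ_smooth : ∀ i j, ContDiffOn ℝ (⊤ : ℕ∞) (fun x => π x i j) U)
    (hπ_anti : ∀ x ∈ U, ∀ i j, π x i j = - π x j i)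
    (H : (Fin n → ℝ) → Fin n → Fin n → Fin n → ℝ)
    (hH_smooth : ∀ i j k, ContDiffOn ℝ (⊤ : ℕ∞) (fun x => H x i j k) U)
    (hH_anti₁ : ∀ x ∈ U, ∀ i j k, H x i j k = - H x j i k)
    (hH_anti₂ : ∀ x ∈ U, ∀ i j k, H x i j k = - H x i k j) :
    ∀ x ∈ U,
      ((∀ i j k : Fin n,
          (∑ l, π x i l * pd (fun y => π y j k) l x)
            + (∑ l, π x j l * pd (fun y => π y k i) l x)
            + (∑ l, π x k l * pd (fun y => π y i j) l x)
          = ∑ i', ∑ j', ∑ k', H x i' j' k' * π x i' i * π x j' j * π x k' k)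
        ↔ (∀ i j l : Fin n,
          (∑ m, π x i m * pd (fun y => π y j l) m x)
            - (∑ m, π x j m * pd (fun y => π y i l) m x)
          = ∑ k, (pd (fun y => π y i j) k x
              + ∑ m, ∑ l', H x k m l' * π x m i * π x l' j) * π x k l)) := by
  intro x hx
  refine forall_congr' fun i => forall_congr' fun j => forall_congr' fun k => ?_
  rw [sum_cyclic_form (hH_anti₁ x hx) (hH_anti₂ x hx) (π x · i) (π x · j) (π x · k)]
  have e₁ : ∑ l, π x j l * pd (fun y => π y k i) l x
      = -∑ l, π x j l * pd (fun y => π y i k) l x := by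
    simp only [pd_antisymm hU hπ_anti hx k i, mul_neg, Finset.sum_neg_distrib]
  have e₂ : ∑ l, π x k l * pd (fun y => π y i j) l x
      = -∑ l, pd (fun y => π y i j) l x * π x l k := by
    rw [← Finset.sum_neg_distrib]
    refine Finset.sum_congr rfl fun l _ => ?_
    rw [hπ_anti x hx k l]
    ring
  simp only [add_mul, Finset.sum_add_distrib]
  rw [e₁, e₂]
  constructor <;> intro h <;> linarith
end
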